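/- arXiv:2209.07532 — 4 statements merged into one kernel-verified Lean document; each statement's English description precedes it below -/
import Mathlib

section
/- In the continuum market model there exists exactly one competitive equilibrium price: there is a unique p* ≥ 0 with d(p*) = s(p*) (equivalently 1 − F(p*) = G(p*)). Moreover 0 < p* < v̄_b, the excess demand satisfies e(p) > 0 for every p with 0 ≤ p < p*, and e(p) < 0 for every p > p*. -/
/-!
An equilibrium price is a point where `F + G` takes the value `1`. On `[0, v̄_b]` this sum increases
strictly from `0` to `1 + G v̄_b > 1`, so it crosses the level `1` exactly once there, strictly
inside the interval. Beyond `v̄_b` it never decreases, so it cannot return to `1`.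
-/

open Set

section LinearOrder

variable {α β : Type*} [LinearOrder α] [Preorder β] {f : α → β} {a b : α}

theorem monotoneOn_Ici_of_Icc_of_eq_const {c : β} (hab : a ≤ b) (hmono : MonotoneOn f (Icc a b))
    (hconst : ∀ x, b ≤ x → f x = c) : MonotoneOn f (Ici a) := by
  have hmono_right : MonotoneOn f (Ici b) := fun x hx y hy _ =>
    ((hconst x hx).trans (hconst y hy).symm).le
  rw [← Icc_union_Ici_eq_Ici hab]
  exact hmono.union_right hmono_right (isGreatest_Icc hab) isLeast_Ici

theorem lt_of_strictMonoOn_Icc_of_monotoneOn_Ici (hstrict : StrictMonoOn f (Icc a b))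
    (hmono : MonotoneOn f (Ici a)) {x y : α} (hax : a ≤ x) (hxb : x < b) (hxy : x < y) :
    f x < f y := by
  have hx_lt_min : x < min y b := lt_min hxy hxb
  have ha_le_min : a ≤ min y b := hax.trans hx_lt_min.le
  calc
    f x < f (min y b) := hstrict ⟨hax, hxb.le⟩ ⟨ha_le_min, min_le_right y b⟩ hx_lt_min
    _ ≤ f y := hmono ha_le_min (hax.trans hxy.le) (min_le_left y b)

end LinearOrder

theorem exists_mem_Ioo_eq_and_lt_and_gt {α β : Type*} [ConditionallyCompleteLinearOrder α]
    [TopologicalSpace α] [OrderTopology α] [DenselyOrdered α] [LinearOrder β] [TopologicalSpace β]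
    [OrderClosedTopology β] {f : α → β} {a b : α} {c : β} (hab : a ≤ b)
    (hcont : ContinuousOn f (Icc a b)) (hstrict : StrictMonoOn f (Icc a b))
    (hmono : MonotoneOn f (Ici a)) (hc : c ∈ Ioo (f a) (f b)) :
    ∃ x ∈ Ioo a b, f x = c ∧ (∀ y, a ≤ y → y < x → f y < c) ∧ ∀ y, x < y → c < f y := by
  obtain ⟨x, ⟨hax, hxb⟩, rfl⟩ := intermediate_value_Ioo hab hcont hc
  exact ⟨x, ⟨hax, hxb⟩, rfl,
    fun y hay hyx => hstrict ⟨hay, (hyx.trans hxb).le⟩ ⟨hax.le, hxb.le⟩ hyx,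
    fun y hxy => lt_of_strictMonoOn_Icc_of_monotoneOn_Ici hstrict hmono hax.le hxb hxy⟩

theorem unique_competitive_equilibrium_general {vb : ℝ} {F G : ℝ → ℝ} (hvb : 0 ≤ vb)
    (hFcont : ContinuousOn F (Icc 0 vb)) (hGcont : ContinuousOn G (Icc 0 vb))
    (hFstrict : StrictMonoOn F (Icc 0 vb)) (hFmono : MonotoneOn F (Ici 0))
    (hGmono : MonotoneOn G (Ici 0)) (hzero : F 0 + G 0 < 1) (hone : 1 < F vb + G vb) :
    ∃ pstar : ℝ, 0 ≤ pstar ∧ 1 - F pstar = G pstar ∧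
      (∀ p : ℝ, 0 ≤ p → 1 - F p = G p → p = pstar) ∧
      0 < pstar ∧ pstar < vb ∧
      (∀ p : ℝ, 0 ≤ p → p < pstar → 0 < 1 - F p - G p) ∧
      (∀ p : ℝ, pstar < p → 1 - F p - G p < 0) := by
  obtain ⟨q, ⟨hq_pos, hq_lt⟩, hq_eq, hbelow, habove⟩ :=
    exists_mem_Ioo_eq_and_lt_and_gt (f := fun p => F p + G p) hvb (hFcont.add hGcont)
      (hFstrict.add_monotone (hGmono.mono Icc_subset_Ici_self)) (hFmono.add hGmono) ⟨hzero, hone⟩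
  have hdemand_pos : ∀ p, 0 ≤ p → p < q → 0 < 1 - F p - G p := fun p hp hpq => by
    linarith [hbelow p hp hpq]
  have hdemand_neg : ∀ p, q < p → 1 - F p - G p < 0 := fun p hqp => by
    linarith [habove p hqp]
  have hunique : ∀ p, 0 ≤ p → 1 - F p = G p → p = q := fun p hp hclear => by
    have hdemand_zero : 1 - F p - G p = 0 := sub_eq_zero.mpr hclear
    exact le_antisymm (not_lt.mp fun hqp => (hdemand_neg p hqp).ne hdemand_zero)
      (not_lt.mp fun hpq => (hdemand_pos p hp hpq).ne' hdemand_zero)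
  exact ⟨q, hq_pos.le, sub_eq_of_eq_add' hq_eq.symm, hunique, hq_pos, hq_lt, hdemand_pos,
    hdemand_neg⟩

/-- In the continuum market model (buyer-valuation CDF `F`,
seller-valuation CDF `G`, demand `d p = 1 - F p`, supply `s p = G p`, excess
demand `e p = 1 - F p - G p`) there exists exactly one competitive equilibrium
price: a unique `pstar ≥ 0` with `1 - F pstar = G pstar`.  Moreover
`0 < pstar < v̄_b`, excess demand is positive for every `0 ≤ p < pstar`, and
negative for every `p > pstar`. -/
theorem unique_competitive_equilibrium
    (vb vs : ℝ) (hvb : 0 < vb) (hvs : 0 < vs)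
    (F G : ℝ → ℝ)
    (hFcont : Continuous F) (hGcont : Continuous G)
    (hFzero : ∀ p : ℝ, p ≤ 0 → F p = 0) (hFone : ∀ p : ℝ, vb ≤ p → F p = 1)
    (hFmono : StrictMonoOn F (Set.Icc 0 vb))
    (hGzero : ∀ p : ℝ, p ≤ 0 → G p = 0) (hGone : ∀ p : ℝ, vs ≤ p → G p = 1)
    (hGmono : StrictMonoOn G (Set.Icc 0 vs)) :
    ∃ pstar : ℝ, 0 ≤ pstar ∧ 1 - F pstar = G pstar ∧
      (∀ p : ℝ, 0 ≤ p → 1 - F p = G p → p = pstar) ∧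
      0 < pstar ∧ pstar < vb ∧
      (∀ p : ℝ, 0 ≤ p → p < pstar → 0 < 1 - F p - G p) ∧
      (∀ p : ℝ, pstar < p → 1 - F p - G p < 0) := by
  have hFmono_Ici := monotoneOn_Ici_of_Icc_of_eq_const hvb.le hFmono.monotoneOn hFone
  have hGmono_Ici := monotoneOn_Ici_of_Icc_of_eq_const hvs.le hGmono.monotoneOn hGone
  have hsupply_pos : 0 < G vb := hGzero 0 le_rfl ▸
    lt_of_strictMonoOn_Icc_of_monotoneOn_Ici hGmono hGmono_Ici le_rfl hvs hvb
  exact unique_competitive_equilibrium_general hvb.le hFcont.continuousOn hGcont.continuousOn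
    hFmono hFmono_Ici hGmono_Ici
    (by linarith [hFzero 0 le_rfl, hGzero 0 le_rfl]) (by linarith [hFone vb le_rfl])
end

section
/- (Proposition 1) Consider the continuum market model with unique competitive equilibrium price p* (the unique p ≥ 0 with 1 − F(p) = G(p)). Let ε⁻ > 0 and ε⁺ > 0, let T_b : ℝ → ℝ be a measurable function whose restriction to [0, v̄_b] is a CE-preserving transformation (with parameters p*, ε⁻, ε⁺), and let T_s : ℝ → ℝ be a measurable function whose restriction to [0, v̄_s] is a CE-preserving transformation (with parameters p*, ε⁻, ε⁺). Let μ_b and μ_s be probability measures on ℝ whose CDFs are F and G respectively, and define F'(p) = (T_b)_*μ_b((−∞, p]) and G'(p) = (T_s)_*μ_s((−∞, p]). Then p* remains the unique competitive equilibrium price of the transformed market: for every p ≥ 0, 1 − F'(p) = G'(p) if and only if p = p*. -/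
open MeasureTheory

/-- A CE-preserving transformation on `[0, vbar]` (with parameters
`pstar, εm, εp`): a nonnegative-valued map `T` that (1) weakly decreases
valuations below `pstar - εm`, (2) fixes valuations strictly between
`pstar - εm` and `pstar + εp`, and (3) maps valuations at or above
`pstar + εp` into `[pstar + εp, v]`. -/
def CEPreserving (pstar εm εp vbar : ℝ) (T : ℝ → ℝ) : Prop :=
  (∀ v ∈ Set.Icc (0 : ℝ) vbar, 0 ≤ T v) ∧
  (∀ v ∈ Set.Icc (0 : ℝ) vbar, v ≤ pstar - εm → T v ≤ v) ∧
  (∀ v ∈ Set.Icc (0 : ℝ) vbar, pstar - εm < v → v < pstar + εp → T v = v) ∧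
  (∀ v ∈ Set.Icc (0 : ℝ) vbar, pstar + εp ≤ v → pstar + εp ≤ T v ∧ T v ≤ v)

/-!
Write `Z p` for the mass of sellers valued at most `p` minus the mass of buyers valued above `p`.
Equilibria are the zeros of the monotone function `Z`. A CE-preserving transformation never raises
a valuation, so the transformed function `Z'` satisfies `Z ≤ Z'`, and valuations do not cross prices
close to `pstar`, so `Z' = Z` there. A zero `p > pstar` of `Z'` is then a zero of `Z`, because
`0 = Z pstar ≤ Z p ≤ Z' p = 0`. If instead `p < pstar`, then `Z` vanishes at every `q < pstar` that
is at least `p` and close to `pstar`, because `0 = Z' p ≤ Z' q = Z q ≤ Z pstar = 0`.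
-/

open Set Filter Topology

theorem eq_iff_eq_of_monotone_of_le_of_eventuallyEq {α β : Type*}
    [LinearOrder α] [TopologicalSpace α] [ClosedIicTopology α] [PartialOrder β]
    {f g : α → β} {s : Set α} {x₀ x : α} {c : β} [(𝓝[<] x₀).NeBot]
    (hf : Monotone f) (hg : Monotone g) (hfg : f ≤ g) (heq : g =ᶠ[𝓝 x₀] f) (hs : IsUpperSet s)
    (hc : f x₀ = c) (huniq : ∀ y ∈ s, f y = c → y = x₀) (hx : x ∈ s) :
    g x = c ↔ x = x₀ := by
  refine ⟨fun hgx => ?_, fun hxx₀ => by rw [hxx₀, heq.eq_of_nhds, hc]⟩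
  rcases lt_or_ge x x₀ with hlt | hge
  · obtain ⟨y, hgy, hxy, hyx₀⟩ :=
      ((heq.filter_mono nhdsWithin_le_nhds).and (Ico_mem_nhdsLT hlt)).exists
    have hfy : f y = c := le_antisymm ((hf hyx₀.le).trans_eq hc) <| calc
      c = g x := hgx.symm
      _ ≤ g y := hg hxy
      _ = f y := hgy
    exact absurd (huniq y (hs hxy hx) hfy) hyx₀.ne
  · exact huniq x hx (le_antisymm ((hfg x).trans_eq hgx) (hc.symm.trans_le (hf hge)))

section Measure

variable {α β : Type*} [MeasurableSpace α] [MeasurableSpace β] {μ : Measure α} {T : α → β}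
  {s : Set α} {t : Set β}

theorem measureReal_le_map_of_ae_imp [IsFiniteMeasure μ] (hT : AEMeasurable T μ)
    (ht : MeasurableSet t) (h : ∀ᵐ a ∂μ, a ∈ s → T a ∈ t) :
    μ.real s ≤ (μ.map T).real t := by
  rw [map_measureReal_apply_of_aemeasurable hT ht]
  exact ENNReal.toReal_mono (measure_ne_top _ _) (measure_mono_ae h)

theorem map_measureReal_le_of_ae_imp [IsFiniteMeasure μ] (hT : AEMeasurable T μ)
    (ht : MeasurableSet t) (h : ∀ᵐ a ∂μ, T a ∈ t → a ∈ s) :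
    (μ.map T).real t ≤ μ.real s := by
  rw [map_measureReal_apply_of_aemeasurable hT ht]
  exact ENNReal.toReal_mono (measure_ne_top _ _) (measure_mono_ae h)

theorem ae_mem_Ioc_of_measureReal_Iic [LinearOrder α] [TopologicalSpace α] [ClosedIicTopology α]
    [OpensMeasurableSpace α] [IsProbabilityMeasure μ] {a b : α}
    (ha : μ.real (Iic a) = 0) (hb : μ.real (Iic b) = 1) : ∀ᵐ v ∂μ, v ∈ Ioc a b := by
  have hav : ∀ᵐ v ∂μ, v ∉ Iic a :=
    measure_eq_zero_iff_ae_notMem.1 ((measureReal_eq_zero_iff).1 ha)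
  have hvb : ∀ᵐ v ∂μ, v ∈ Iic b :=
    (mem_ae_iff_prob_eq_one measurableSet_Iic).2 ((ENNReal.toReal_eq_one_iff _).1 hb)
  filter_upwards [hav, hvb] with v hav hvb
  exact ⟨not_le.1 hav, hvb⟩

end Measure

/-- Supply minus demand at price `p`, for sellers and buyers with valuations distributed by `μs` and
`μb`; its zeros are the competitive equilibrium prices. Demand is the mass of buyers valued strictly
above `p`, which is `1 - F p` when `μb` is a probability measure with CDF `F`. -/
noncomputable def excessSupply (μb μs : Measure ℝ) (p : ℝ) : ℝ :=
  μs.real (Iic p) - μb.real (Ioi p)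

section ExcessSupply

variable {μb μs : Measure ℝ} {Tb Ts : ℝ → ℝ} {p : ℝ}

theorem excessSupply_eq_zero_iff [IsProbabilityMeasure μb] :
    excessSupply μb μs p = 0 ↔ 1 - μb.real (Iic p) = μs.real (Iic p) := by
  rw [excessSupply, ← compl_Iic, probReal_compl_eq_one_sub measurableSet_Iic, sub_eq_zero, eq_comm]

variable [IsFiniteMeasure μb] [IsFiniteMeasure μs]

theorem monotone_excessSupply : Monotone (excessSupply μb μs) := fun _ _ hpq =>
  sub_le_sub (measureReal_mono (Iic_subset_Iic.2 hpq)) (measureReal_mono (Ioi_subset_Ioi hpq))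

theorem excessSupply_le_map (hTb : AEMeasurable Tb μb) (hTs : AEMeasurable Ts μs)
    (hb : ∀ᵐ v ∂μb, v ≤ p → Tb v ≤ p) (hs : ∀ᵐ v ∂μs, v ≤ p → Ts v ≤ p) :
    excessSupply μb μs p ≤ excessSupply (μb.map Tb) (μs.map Ts) p :=
  sub_le_sub (measureReal_le_map_of_ae_imp hTs measurableSet_Iic hs)
    (map_measureReal_le_of_ae_imp hTb measurableSet_Ioi
      (hb.mono fun _ hv => lt_imp_lt_of_le_imp_le hv))

theorem excessSupply_map_le (hTb : AEMeasurable Tb μb) (hTs : AEMeasurable Ts μs)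
    (hb : ∀ᵐ v ∂μb, Tb v ≤ p → v ≤ p) (hs : ∀ᵐ v ∂μs, Ts v ≤ p → v ≤ p) :
    excessSupply (μb.map Tb) (μs.map Ts) p ≤ excessSupply μb μs p :=
  sub_le_sub (map_measureReal_le_of_ae_imp hTs measurableSet_Iic hs)
    (measureReal_le_map_of_ae_imp hTb measurableSet_Ioi
      (hb.mono fun _ hv => lt_imp_lt_of_le_imp_le hv))

end ExcessSupply

namespace CEPreserving

variable {pstar εm εp vbar p v : ℝ} {T : ℝ → ℝ}

theorem apply_le (hT : CEPreserving pstar εm εp vbar T) (hv : v ∈ Icc 0 vbar) : T v ≤ v := by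
  obtain ⟨-, hlow, hmid, hhigh⟩ := hT
  rcases le_or_gt v (pstar - εm) with hvm | hvm
  · exact hlow v hv hvm
  rcases lt_or_ge v (pstar + εp) with hvp | hvp
  · exact (hmid v hv hvm hvp).le
  · exact (hhigh v hv hvp).2

theorem le_of_apply_le (hT : CEPreserving pstar εm εp vbar T) (hv : v ∈ Icc 0 vbar)
    (hp : p ∈ Ioo (pstar - εm) (pstar + εp)) (hTv : T v ≤ p) : v ≤ p := by
  obtain ⟨-, -, hmid, hhigh⟩ := hT
  rcases le_or_gt v (pstar - εm) with hvm | hvm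
  · exact hvm.trans hp.1.le
  rcases lt_or_ge v (pstar + εp) with hvp | hvp
  · exact (hmid v hv hvm hvp).symm.trans_le hTv
  · exact absurd ((hhigh v hv hvp).1.trans hTv) hp.2.not_ge

end CEPreserving

theorem cePreserving_shift_preserves_equilibrium_general
    {μb μs : Measure ℝ} [IsFiniteMeasure μb] [IsFiniteMeasure μs] {vb vs pstar εm εp : ℝ}
    {Tb Ts : ℝ → ℝ} (hμb : ∀ᵐ v ∂μb, v ∈ Icc 0 vb) (hμs : ∀ᵐ v ∂μs, v ∈ Icc 0 vs)
    (hpstar : excessSupply μb μs pstar = 0)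
    (huniq : ∀ p, 0 ≤ p → excessSupply μb μs p = 0 → p = pstar)
    (hεm : 0 < εm) (hεp : 0 < εp) (hTbmeas : AEMeasurable Tb μb) (hTsmeas : AEMeasurable Ts μs)
    (hTb : CEPreserving pstar εm εp vb Tb) (hTs : CEPreserving pstar εm εp vs Ts)
    {p : ℝ} (hp : 0 ≤ p) :
    excessSupply (μb.map Tb) (μs.map Ts) p = 0 ↔ p = pstar := by
  have hle : excessSupply μb μs ≤ excessSupply (μb.map Tb) (μs.map Ts) := fun q =>
    excessSupply_le_map hTbmeas hTsmeas (hμb.mono fun _ hv => (hTb.apply_le hv).trans)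
      (hμs.mono fun _ hv => (hTs.apply_le hv).trans)
  have heq : excessSupply (μb.map Tb) (μs.map Ts) =ᶠ[𝓝 pstar] excessSupply μb μs := by
    filter_upwards [Ioo_mem_nhds (sub_lt_self pstar hεm) (lt_add_of_pos_right pstar hεp)] with q hq
    exact (excessSupply_map_le hTbmeas hTsmeas (hμb.mono fun _ hv => hTb.le_of_apply_le hv hq)
      (hμs.mono fun _ hv => hTs.le_of_apply_le hv hq)).antisymm (hle q)
  exact eq_iff_eq_of_monotone_of_le_of_eventuallyEq monotone_excessSupply monotone_excessSupply
    hle heq (isUpperSet_Ici 0) hpstar huniq hp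

/-- **Proposition 1.** In the continuum market model with
unique competitive equilibrium price `pstar`, apply a CE-preserving demand
contraction `Tb` to buyer valuations (distributed by `μb`, with CDF `F`) and a
CE-preserving supply expansion `Ts` to seller valuations (distributed by `μs`,
with CDF `G`).  Then `pstar` remains the unique competitive equilibrium price
of the transformed market: writing `F'` and `G'` for the CDFs of the
pushforward measures, for every `p ≥ 0` one has `1 - F' p = G' p ↔ p = pstar`. -/
theorem cePreserving_shift_preserves_equilibrium
    (vb vs : ℝ) (hvb : 0 < vb) (hvs : 0 < vs)
    (F G : ℝ → ℝ)
    (hFcont : Continuous F) (hGcont : Continuous G)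
    (hFzero : ∀ p : ℝ, p ≤ 0 → F p = 0) (hFone : ∀ p : ℝ, vb ≤ p → F p = 1)
    (hFmono : StrictMonoOn F (Set.Icc 0 vb))
    (hGzero : ∀ p : ℝ, p ≤ 0 → G p = 0) (hGone : ∀ p : ℝ, vs ≤ p → G p = 1)
    (hGmono : StrictMonoOn G (Set.Icc 0 vs))
    (pstar : ℝ) (hps0 : 0 ≤ pstar) (hpseq : 1 - F pstar = G pstar)
    (hpsuniq : ∀ p : ℝ, 0 ≤ p → 1 - F p = G p → p = pstar)
    (εm εp : ℝ) (hεm : 0 < εm) (hεp : 0 < εp)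
    (Tb Ts : ℝ → ℝ) (hTbmeas : Measurable Tb) (hTsmeas : Measurable Ts)
    (hTb : CEPreserving pstar εm εp vb Tb)
    (hTs : CEPreserving pstar εm εp vs Ts)
    (μb μs : Measure ℝ) [IsProbabilityMeasure μb] [IsProbabilityMeasure μs]
    (hμbF : ∀ p : ℝ, (μb (Set.Iic p)).toReal = F p)
    (hμsG : ∀ p : ℝ, (μs (Set.Iic p)).toReal = G p) :
    ∀ p : ℝ, 0 ≤ p →
      (1 - (μb.map Tb (Set.Iic p)).toReal = (μs.map Ts (Set.Iic p)).toReal ↔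
        p = pstar) := by
  intro p hp
  obtain rfl : (fun q => μb.real (Iic q)) = F := funext hμbF
  obtain rfl : (fun q => μs.real (Iic q)) = G := funext hμsG
  have := Measure.isProbabilityMeasure_map (μ := μb) hTbmeas.aemeasurable
  simp only [← measureReal_def, ← excessSupply_eq_zero_iff] at hpseq hpsuniq ⊢
  exact cePreserving_shift_preserves_equilibrium_general
    ((ae_mem_Ioc_of_measureReal_Iic (hFzero 0 le_rfl) (hFone vb le_rfl)).mono Ioc_subset_Icc_self)
    ((ae_mem_Ioc_of_measureReal_Iic (hGzero 0 le_rfl) (hGone vs le_rfl)).mono Ioc_subset_Icc_self)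
    hpseq hpsuniq hεm hεp hTbmeas.aemeasurable hTsmeas.aemeasurable hTb hTs hp
end

section
/- Let v̄_b > 0 and v̄_s > 0, let F : [0, v̄_b] → [0, 1] and G : [0, v̄_s] → [0, 1] be strictly increasing continuous bijections with F(0) = 0 and G(0) = 0, with inverses F⁻¹ and G⁻¹, and let p* be the unique p with 1 − F(p) = G(p) (where F and G are extended by F = 1 above v̄_b and G = 1 above v̄_s). Suppose T ∈ [0, 1] satisfies: for every i ∈ [0, 1], i ≤ T if and only if F⁻¹(1 − i) ≥ G⁻¹(i). Then F⁻¹(1 − T) = G⁻¹(T) = p*: the final buyer valuation and final seller valuation along the Marshallian trading order both equal the unique competitive equilibrium price. -/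
/-!
Let `q = G p*` be the quantity traded in equilibrium. At time `q` both valuations equal `p*`, so
that trade takes place and `q ≤ T`. From `q` to `T` the buyer valuation `Finv (1 - i)` can only fall
and the seller valuation `Ginv i` can only rise, yet at `T` the former is still at least the latter:
`Finv (1 - T) ≤ p* ≤ Ginv T ≤ Finv (1 - T)`. What remains is to see that `p*` lies in both
supports: above `v̄_b` the demand `1 - F` vanishes, whereas supply is positive at positive prices,
and symmetrically above `v̄_s`.
-/

open Set

theorem eq_and_eq_of_monotoneOn_of_antitoneOn {α β : Type*} [PartialOrder α] [Preorder β]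
    {f g : β → α} {s : Set β} (hf : MonotoneOn f s) (hg : AntitoneOn g s) {x y : β}
    (hx : x ∈ s) (hy : y ∈ s) (hxy : x ≤ y) (hgfx : g x ≤ f x) (hfgy : f y ≤ g y) :
    f y = f x ∧ g y = g x := by
  have hfxy : f x ≤ f y := hf hx hy hxy
  have hgyx : g y ≤ g x := hg hx hy hxy
  exact ⟨(hfgy.trans (hgyx.trans hgfx)).antisymm hfxy, hgyx.antisymm (hgfx.trans (hfxy.trans hfgy))⟩

/-- `Q` is a quantile function of a distribution function `F` supported on `[a, v]`. Asking only for
a monotone left inverse, instead of a two-sided one, lets `F` have jumps. -/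
structure IsQuantileFunction {α R : Type*} [Preorder α] [Preorder R] [Zero R] [One R]
    (Q : R → α) (F : α → R) (a v : α) : Prop where
  le : a ≤ v
  mapsTo : MapsTo F (Icc a v) (Icc 0 1)
  eq_one_of_le : ∀ p, v ≤ p → F p = 1
  leftInvOn : LeftInvOn Q F (Icc a v)
  monotoneOn : MonotoneOn Q (Icc 0 1)

namespace IsQuantileFunction

theorem of_invOn {α R : Type*} [LinearOrder α] [PartialOrder R] [Zero R] [One R]
    {Q : R → α} {F : α → R} {a v : α} (hav : a ≤ v) (hF : MonotoneOn F (Icc a v))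
    (hFmaps : MapsTo F (Icc a v) (Icc 0 1)) (hFone : ∀ p, v ≤ p → F p = 1)
    (hinv : InvOn Q F (Icc a v) (Icc 0 1)) (hQmaps : MapsTo Q (Icc 0 1) (Icc a v)) :
    IsQuantileFunction Q F a v where
  le := hav
  mapsTo := hFmaps
  eq_one_of_le := hFone
  leftInvOn := hinv.1
  monotoneOn := Function.monotoneOn_of_rightInvOn_of_mapsTo hF hinv.2 hQmaps

theorem antitoneOn_comp_one_sub {α R : Type*} [Preorder α] [Ring R] [PartialOrder R]
    [IsOrderedRing R] {Q : R → α} {F : α → R} {a v : α} (hQ : IsQuantileFunction Q F a v) :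
    AntitoneOn (fun i => Q (1 - i)) (Icc 0 1) := fun _ hi _ hj hij =>
  hQ.monotoneOn (Icc.one_sub_mem hj) (Icc.one_sub_mem hi) (sub_le_sub_left hij 1)

theorem pos_of_lt {α R : Type*} [LinearOrder α] [PartialOrder R] [Zero R] [One R]
    [ZeroLEOneClass R] [NeZero (1 : R)] {Q : R → α} {F : α → R} {a v p : α}
    (hQ : IsQuantileFunction Q F a v) (hap : a < p) : 0 < F p := by
  rcases le_total v p with hvp | hpv
  · rw [hQ.eq_one_of_le p hvp]
    exact one_pos
  · have ha : a ∈ Icc a v := left_mem_Icc.2 hQ.le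
    have hp : p ∈ Icc a v := ⟨hap.le, hpv⟩
    refine (hQ.mapsTo hp).1.lt_of_ne' fun hFp => hap.not_ge ?_
    have hFpa : F p ≤ F a := hFp.trans_le (hQ.mapsTo ha).1
    calc p = Q (F p) := (hQ.leftInvOn hp).symm
      _ ≤ Q (F a) := hQ.monotoneOn (hQ.mapsTo hp) (hQ.mapsTo ha) hFpa
      _ = a := hQ.leftInvOn ha

theorem le_of_one_sub_eq {α R : Type*} [LinearOrder α] [Ring R] [PartialOrder R]
    [ZeroLEOneClass R] [Nontrivial R] {F G : α → R} {Finv Ginv : R → α} {a vb vs p : α}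
    (hF : IsQuantileFunction Finv F a vb) (hG : IsQuantileFunction Ginv G a vs)
    (heq : 1 - F p = G p) : p ≤ vb := by
  by_contra! hp
  have hGp : G p = 0 := by rw [← heq, hF.eq_one_of_le p hp.le, sub_self]
  exact (hG.pos_of_lt (hF.le.trans_lt hp)).ne' hGp

end IsQuantileFunction

theorem marshallian_final_valuations_eq_equilibrium_general {α R : Type*} [LinearOrder α]
    [Ring R] [PartialOrder R] [IsOrderedRing R] [Nontrivial R]
    {F G : α → R} {Finv Ginv : R → α} {a vb vs p : α} {T : R}
    (hF : IsQuantileFunction Finv F a vb) (hG : IsQuantileFunction Ginv G a vs)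
    (hap : a ≤ p) (heq : 1 - F p = G p)
    (hT : IsGreatest {i ∈ Icc 0 1 | Ginv i ≤ Finv (1 - i)} T) :
    Finv (1 - T) = p ∧ Ginv T = p := by
  have heq' : 1 - G p = F p := by rw [← heq, sub_sub_cancel]
  have hpb : p ∈ Icc a vb := ⟨hap, hF.le_of_one_sub_eq hG heq⟩
  have hps : p ∈ Icc a vs := ⟨hap, hG.le_of_one_sub_eq hF heq'⟩
  have hseller : Ginv (G p) = p := hG.leftInvOn hps
  have hbuyer : Finv (1 - G p) = p := by rw [heq', hF.leftInvOn hpb]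
  have hq : G p ∈ Icc 0 1 := hG.mapsTo hps
  have hqT : G p ≤ T := hT.2 ⟨hq, (hseller.trans hbuyer.symm).le⟩
  obtain ⟨hGinvT, hFinvT⟩ := eq_and_eq_of_monotoneOn_of_antitoneOn hG.monotoneOn
    hF.antitoneOn_comp_one_sub hq hT.1.1 hqT (hbuyer.trans hseller.symm).le hT.1.2
  exact ⟨hFinvT.trans hbuyer, hGinvT.trans hseller⟩

/-- Let `F : [0, v̄_b] → [0, 1]` and `G : [0, v̄_s] → [0, 1]`
be strictly increasing continuous bijections with `F 0 = 0` and `G 0 = 0`,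
with inverses `Finv` and `Ginv`, extended by `F = 1` above `v̄_b` and `G = 1`
above `v̄_s`, and let `pstar` be the unique `p ≥ 0` with `1 - F p = G p`.
If `T ∈ [0, 1]` satisfies, for every `i ∈ [0, 1]`,
`i ≤ T ↔ Finv (1 - i) ≥ Ginv i`, then
`Finv (1 - T) = Ginv T = pstar`: the final buyer and seller valuations along
the Marshallian trading order both equal the unique competitive equilibrium
price. -/
theorem marshallian_final_valuations_eq_equilibrium
    (vb vs : ℝ) (hvb : 0 < vb) (hvs : 0 < vs)
    (F G Finv Ginv : ℝ → ℝ)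
    (hFcont : ContinuousOn F (Set.Icc 0 vb))
    (hFmono : StrictMonoOn F (Set.Icc 0 vb))
    (hFbij : Set.BijOn F (Set.Icc 0 vb) (Set.Icc 0 1))
    (hF0 : F 0 = 0) (hFone : ∀ p : ℝ, vb ≤ p → F p = 1)
    (hFinv : Set.InvOn Finv F (Set.Icc 0 vb) (Set.Icc 0 1))
    (hFinvmaps : Set.MapsTo Finv (Set.Icc 0 1) (Set.Icc 0 vb))
    (hGcont : ContinuousOn G (Set.Icc 0 vs))
    (hGmono : StrictMonoOn G (Set.Icc 0 vs))
    (hGbij : Set.BijOn G (Set.Icc 0 vs) (Set.Icc 0 1))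
    (hG0 : G 0 = 0) (hGone : ∀ p : ℝ, vs ≤ p → G p = 1)
    (hGinv : Set.InvOn Ginv G (Set.Icc 0 vs) (Set.Icc 0 1))
    (hGinvmaps : Set.MapsTo Ginv (Set.Icc 0 1) (Set.Icc 0 vs))
    (pstar : ℝ) (hps0 : 0 ≤ pstar) (hpseq : 1 - F pstar = G pstar)
    (hpsuniq : ∀ p : ℝ, 0 ≤ p → 1 - F p = G p → p = pstar)
    (T : ℝ) (hT : T ∈ Set.Icc (0 : ℝ) 1)
    (htrade : ∀ i ∈ Set.Icc (0 : ℝ) 1, (i ≤ T ↔ Ginv i ≤ Finv (1 - i))) :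
    Finv (1 - T) = pstar ∧ Ginv T = pstar := by
  exact marshallian_final_valuations_eq_equilibrium_general
    (.of_invOn hvb.le hFmono.monotoneOn hFbij.mapsTo hFone hFinv hFinvmaps)
    (.of_invOn hvs.le hGmono.monotoneOn hGbij.mapsTo hGone hGinv hGinvmaps)
    hps0 hpseq ⟨⟨hT, (htrade T hT).1 le_rfl⟩, fun i hi => (htrade i hi.1).2 hi.2⟩
end

section
/- (Proposition 2) Let v̄_b > 0 and v̄_s > 0, let F : [0, v̄_b] → [0, 1] and G : [0, v̄_s] → [0, 1] be strictly increasing continuous bijections with F(0) = 0 and G(0) = 0, with inverses F⁻¹ and G⁻¹, and let p* be the unique p with 1 − F(p) = G(p) (extending F = 1 above v̄_b and G = 1 above v̄_s). Let T ∈ [0, 1] and let v_b, v_s, p : [0, T] → ℝ satisfy: (1) v_b(t) = F⁻¹(1 − t) and v_s(t) = G⁻¹(t) for all t ∈ [0, T]; (2) for every i ∈ [0, 1], i ≤ T if and only if F⁻¹(1 − i) ≥ G⁻¹(i); (3) v_s(t) ≤ p(t) ≤ v_b(t) for all t ∈ [0, T]. Then the final trade occurs at the competitive equilibrium price: p(T)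 = p*. -/
/-!
Let `q = G pstar` be the equilibrium quantity. Both marginal valuations at `q` equal `pstar`, so
unit `q` is traded and `q ≤ T`. Along the path the seller's valuation rises and the buyer's falls,
hence `pstar = Ginv q ≤ Ginv T ≤ price T ≤ Finv (1 - T) ≤ Finv (1 - q) = pstar`.
-/

open Set

theorem eq_of_monotoneOn_of_antitoneOn_of_le {ι α : Type*} [Preorder ι] [PartialOrder α]
    {supply demand : ι → α} {s : Set ι} {q t : ι} {p x : α}
    (hsupply : MonotoneOn supply s) (hdemand : AntitoneOn demand s)
    (hq : q ∈ s) (ht : t ∈ s) (hqt : q ≤ t) (hsupply_q : supply q = p) (hdemand_q : demand q = p)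
    (hx : x ∈ Icc (supply t) (demand t)) : x = p := by
  apply le_antisymm
  · calc
      x ≤ demand t := hx.2
      _ ≤ demand q := hdemand hq ht hqt
      _ = p := hdemand_q
  · calc
      p = supply q := hsupply_q.symm
      _ ≤ supply t := hsupply hq ht hqt
      _ ≤ x := hx.1

theorem antitoneOn_comp_const_sub {β α : Type*} [AddCommGroup β] [PartialOrder β]
    [IsOrderedAddMonoid β] [Preorder α] {f : β → α} {c : β} (hf : MonotoneOn f (Icc 0 c)) :
    AntitoneOn (fun i ↦ f (c - i)) (Icc 0 c) := by
  have hmaps : MapsTo (c - ·) (Icc 0 c) (Icc 0 c) :=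
    fun _ hi ↦ ⟨sub_nonneg.2 hi.2, sub_le_self c hi.1⟩
  exact fun _ hi _ hj hij ↦ hf (hmaps hj) (hmaps hi) (sub_le_sub_left hij c)

section Definitions

variable {α : Type*} [Preorder α]

/-- `F` is the distribution function, on nonnegative valuations, of valuations filling `[0, b]`
without an atom at `0`; atoms elsewhere are allowed. Valuations lie in an ordered type `α`, so that
they may for instance be restricted to a price grid. -/
structure IsValuationCDF [Zero α] (F : α → ℝ) (b : α) : Prop where
  map_zero : F 0 = 0
  strictMonoOn : StrictMonoOn F (Icc 0 b)
  eq_one : ∀ p, b ≤ p → F p = 1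

/-- `p` is a competitive equilibrium price: the mass `1 - F p` of buyers willing to pay `p` equals
the mass `G p` of sellers willing to accept it. -/
structure IsEquilibriumPrice [Zero α] (F G : α → ℝ) (p : α) : Prop where
  nonneg : 0 ≤ p
  demand_eq_supply : 1 - F p = G p

/-- `(vB, vS, price)` is a Marshallian path on the set of trades `[0, T]`, for the quantile
functions `Finv` of the buyers and `Ginv` of the sellers. The functions are total; only the values
of `vB`, `vS` and `price` on `[0, T]` are constrained. -/
structure IsMarshallianPath (Finv Ginv : ℝ → α) (T : ℝ) (vB vS price : ℝ → α) : Prop where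
  mem_Icc : T ∈ Icc (0 : ℝ) 1
  valuations_eq : ∀ t ∈ Icc 0 T, vB t = Finv (1 - t) ∧ vS t = Ginv t
  le_final_iff : ∀ i ∈ Icc (0 : ℝ) 1, i ≤ T ↔ Ginv i ≤ Finv (1 - i)
  price_between : ∀ t ∈ Icc 0 T, vS t ≤ price t ∧ price t ≤ vB t

theorem IsEquilibriumPrice.symm [Zero α] {F G : α → ℝ} {p : α} (hp : IsEquilibriumPrice F G p) :
    IsEquilibriumPrice G F p :=
  ⟨hp.nonneg, by linarith [hp.demand_eq_supply]⟩

theorem IsMarshallianPath.final_price_mem_Icc {Finv Ginv : ℝ → α} {T : ℝ} {vB vS price : ℝ → α}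
    (hpath : IsMarshallianPath Finv Ginv T vB vS price) :
    price T ∈ Icc (Ginv T) (Finv (1 - T)) := by
  have hT : T ∈ Icc 0 T := ⟨hpath.mem_Icc.1, le_rfl⟩
  obtain ⟨hvB, hvS⟩ := hpath.valuations_eq T hT
  rw [← hvB, ← hvS]
  exact hpath.price_between T hT

end Definitions

section Market

variable {α : Type*} [LinearOrder α] [Zero α]

namespace IsValuationCDF

variable {F : α → ℝ} {b p : α}

theorem upper_pos (hF : IsValuationCDF F b) : 0 < b := by
  by_contra! hb
  exact zero_ne_one (hF.map_zero.symm.trans (hF.eq_one 0 hb))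

theorem pos (hF : IsValuationCDF F b) (hp : 0 < p) : 0 < F p := by
  rcases le_total b p with hbp | hpb
  · simp [hF.eq_one p hbp]
  · calc
      0 = F 0 := hF.map_zero.symm
      _ < F p := hF.strictMonoOn ⟨le_rfl, hF.upper_pos.le⟩ ⟨hp.le, hpb⟩ hp

theorem nonneg (hF : IsValuationCDF F b) (hp : 0 ≤ p) : 0 ≤ F p := by
  rcases hp.eq_or_lt with rfl | hp
  · exact hF.map_zero.ge
  · exact (hF.pos hp).le

end IsValuationCDF

namespace IsEquilibriumPrice

variable {F G : α → ℝ} {vb vs p : α}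

theorem mem_Icc_seller (hp : IsEquilibriumPrice F G p) (hF : IsValuationCDF F vb)
    (hG : IsValuationCDF G vs) : p ∈ Icc 0 vs := by
  refine ⟨hp.nonneg, ?_⟩
  by_contra! hvs
  have hFp : 0 < F p := hF.pos (hG.upper_pos.trans hvs)
  have hGp : G p = 1 := hG.eq_one p hvs.le
  linarith [hp.demand_eq_supply]

theorem mem_Icc_buyer (hp : IsEquilibriumPrice F G p) (hF : IsValuationCDF F vb)
    (hG : IsValuationCDF G vs) : p ∈ Icc 0 vb :=
  hp.symm.mem_Icc_seller hG hF

theorem supply_mem_Icc (hp : IsEquilibriumPrice F G p) (hF : IsValuationCDF F vb)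
    (hG : IsValuationCDF G vs) : G p ∈ Icc (0 : ℝ) 1 :=
  ⟨hG.nonneg hp.nonneg, by linarith [hF.nonneg hp.nonneg, hp.demand_eq_supply]⟩

end IsEquilibriumPrice

theorem marshallian_path_final_price_eq_equilibrium_general
    {F G : α → ℝ} {vb vs : α} (hF : IsValuationCDF F vb) (hG : IsValuationCDF G vs)
    {Finv Ginv : ℝ → α}
    (hFinv : LeftInvOn Finv F (Icc 0 vb)) (hFinv_mono : MonotoneOn Finv (Icc 0 1))
    (hGinv : LeftInvOn Ginv G (Icc 0 vs)) (hGinv_mono : MonotoneOn Ginv (Icc 0 1))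
    {pstar : α} (hpstar : IsEquilibriumPrice F G pstar)
    {T : ℝ} {vB vS price : ℝ → α} (hpath : IsMarshallianPath Finv Ginv T vB vS price) :
    price T = pstar := by
  have hq : G pstar ∈ Icc (0 : ℝ) 1 := hpstar.supply_mem_Icc hF hG
  have hsupply : Ginv (G pstar) = pstar := hGinv (hpstar.mem_Icc_seller hF hG)
  have hdemand : Finv (1 - G pstar) = pstar := by
    rw [hpstar.symm.demand_eq_supply, hFinv (hpstar.mem_Icc_buyer hF hG)]
  have hqT : G pstar ≤ T := (hpath.le_final_iff _ hq).2 (hsupply.trans hdemand.symm).le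
  exact eq_of_monotoneOn_of_antitoneOn_of_le hGinv_mono (antitoneOn_comp_const_sub hFinv_mono)
    hq hpath.mem_Icc hqT hsupply hdemand hpath.final_price_mem_Icc

end Market

/-- **Proposition 2.** Let `F : [0, v̄_b] → [0, 1]` and
`G : [0, v̄_s] → [0, 1]` be strictly increasing continuous bijections with
`F 0 = 0` and `G 0 = 0`, with inverses `Finv` and `Ginv`, extended by `F = 1`
above `v̄_b` and `G = 1` above `v̄_s`, and let `pstar` be the unique `p ≥ 0`
with `1 - F p = G p`.  Suppose `(vB, vS, price)` is a Marshallian path with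
final trade time `T ∈ [0, 1]`:
(1) `vB t = Finv (1 - t)` and `vS t = Ginv t` for all `t ∈ [0, T]`;
(2) for every `i ∈ [0, 1]`, `i ≤ T ↔ Finv (1 - i) ≥ Ginv i`;
(3) `vS t ≤ price t ≤ vB t` for all `t ∈ [0, T]`.
Then the final trade occurs at the competitive equilibrium price:
`price T = pstar`. -/
theorem marshallian_path_final_price_eq_equilibrium
    (vb vs : ℝ) (hvb : 0 < vb) (hvs : 0 < vs)
    (F G Finv Ginv : ℝ → ℝ)
    (hFcont : ContinuousOn F (Set.Icc 0 vb))
    (hFmono : StrictMonoOn F (Set.Icc 0 vb))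
    (hFbij : Set.BijOn F (Set.Icc 0 vb) (Set.Icc 0 1))
    (hF0 : F 0 = 0) (hFone : ∀ p : ℝ, vb ≤ p → F p = 1)
    (hFinv : Set.InvOn Finv F (Set.Icc 0 vb) (Set.Icc 0 1))
    (hFinvmaps : Set.MapsTo Finv (Set.Icc 0 1) (Set.Icc 0 vb))
    (hGcont : ContinuousOn G (Set.Icc 0 vs))
    (hGmono : StrictMonoOn G (Set.Icc 0 vs))
    (hGbij : Set.BijOn G (Set.Icc 0 vs) (Set.Icc 0 1))
    (hG0 : G 0 = 0) (hGone : ∀ p : ℝ, vs ≤ p → G p = 1)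
    (hGinv : Set.InvOn Ginv G (Set.Icc 0 vs) (Set.Icc 0 1))
    (hGinvmaps : Set.MapsTo Ginv (Set.Icc 0 1) (Set.Icc 0 vs))
    (pstar : ℝ) (hps0 : 0 ≤ pstar) (hpseq : 1 - F pstar = G pstar)
    (hpsuniq : ∀ p : ℝ, 0 ≤ p → 1 - F p = G p → p = pstar)
    (T : ℝ) (hT : T ∈ Set.Icc (0 : ℝ) 1)
    (vB vS price : ℝ → ℝ)
    (hpath1 : ∀ t ∈ Set.Icc (0 : ℝ) T, vB t = Finv (1 - t) ∧ vS t = Ginv t)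
    (hpath2 : ∀ i ∈ Set.Icc (0 : ℝ) 1, (i ≤ T ↔ Ginv i ≤ Finv (1 - i)))
    (hpath3 : ∀ t ∈ Set.Icc (0 : ℝ) T, vS t ≤ price t ∧ price t ≤ vB t) :
    price T = pstar := by
  exact marshallian_path_final_price_eq_equilibrium_general
    ⟨hF0, hFmono, hFone⟩ ⟨hG0, hGmono, hGone⟩
    hFinv.1 (Function.monotoneOn_of_rightInvOn_of_mapsTo hFmono.monotoneOn hFinv.2 hFinvmaps)
    hGinv.1 (Function.monotoneOn_of_rightInvOn_of_mapsTo hGmono.monotoneOn hGinv.2 hGinvmaps)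
    ⟨hps0, hpseq⟩ ⟨hT, hpath1, hpath2, hpath3⟩
end
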